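/- arXiv:1904.05543 — 7 statements merged into one kernel-verified Lean document; each statement's English description precedes it below -/
import Mathlib

section
/- Let d be a positive even integer and p ≥ 0 a real number (with the conventions 0^p = 0 for p > 0 and 0^0 = 0). For every s ∈ 𝔽₂^d of Hamming weight d/2, Σ_{z ∈ 𝔽₂^d} (−1)^{⟨s,z⟩} · |d − 2·w_H(z)|^p = Σ_{0 ≤ i ≤ d, i even} (−1)^{i/2} · C(d/2, i/2) · |d − 2i|^p, where ⟨s,z⟩ = Σ_i s_i z_i is computed over the integers. Consequently, the 2^d × 2^d matrix M with entries M_{x,y} = |⟨σ(x), σ(y)⟩|^p (indexed by x, y ∈ 𝔽₂^d) has at least C(d, d/2) eigenvalues, counted with multiplicity, whose absolute value equals |Σ_{0 ≤ i ≤ d, i even} (−1)^{i/2} · C(d/2, i/2) · |d − 2i|^p|. -/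
open Finset Matrix

/-!
The sum `∑_z (-1)^{⟨s,z⟩} f(w_H(z))` is the value at the polynomial
`∏ᵢ (1 + (-1)^{sᵢ} X) = ∑_z (-1)^{⟨s,z⟩} X^{w_H(z)}` of the linear functional `X^k ↦ f k`.
When `s` has weight `d/2` this polynomial is `(1 - X)^{d/2} (1 + X)^{d/2} = (1 - X²)^{d/2}`,
and the binomial theorem gives the closed form.

For the spectral part, `⟨σ(x), σ(x + z)⟩ = d - 2 w_H(z)`, so `M` is a convolution operator on the
group `𝔽₂^d` and every character `χ_s` is an eigenvector of it, with the Fourier coefficient at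
`s` as eigenvalue. Distinct characters are linearly independent, and there are `C(d, d/2)`
vectors `s` of weight `d/2`.
-/

open Polynomial in
theorem prod_poly {d : ℕ} (s : Fin d → ZMod 2) :
    ∑ z : Fin d → ZMod 2,
      monomial (∑ i, (z i).val) ((-1 : ℝ) ^ (∑ i, (s i).val * (z i).val)) =
    (1 - X) ^ (∑ i, (s i).val) * (1 + X) ^ (d - ∑ i, (s i).val) := by
  have h1 : ∀ i, (s i).val ≤ 1 := fun i => Nat.le_of_lt_succ (ZMod.val_lt (s i))
  have h2 : d - ∑ i, (s i).val = ∑ i, (1 - (s i).val) := by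
    have h : ∑ i, ((s i).val + (1 - (s i).val)) = d := by
      rw [Finset.sum_congr rfl (fun i _ => Nat.add_sub_of_le (h1 i))]; simp
    rw [Finset.sum_add_distrib] at h
    omega
  rw [h2, ← Finset.prod_pow_eq_pow_sum, ← Finset.prod_pow_eq_pow_sum, ← Finset.prod_mul_distrib]
  have h3 : ∀ i, (1 - X : ℝ[X]) ^ (s i).val * (1 + X) ^ (1 - (s i).val) =
      ∑ a : ZMod 2, C ((-1 : ℝ) ^ ((s i).val * a.val)) * X ^ a.val := by
    intro i
    have hs : ∀ t : ZMod 2, t = 0 ∨ t = 1 := by decide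
    have hu : (univ : Finset (ZMod 2)) = {0, 1} := by decide
    rw [hu, Finset.sum_pair (by decide)]
    rcases hs (s i) with h | h <;> simp [h, ZMod.val_one] <;> ring
  rw [Finset.prod_congr rfl (fun i _ => h3 i), Finset.prod_univ_sum, Fintype.piFinset_univ]
  refine Finset.sum_congr rfl fun z _ => ?_
  rw [Finset.prod_mul_distrib, Finset.prod_pow_eq_pow_sum, ← map_prod,
    Finset.prod_pow_eq_pow_sum, C_mul_X_pow_eq_monomial]

open Polynomial in
/-- The Fourier coefficient of a radial function `z ↦ f (w_H z)` on `𝔽₂^{2n}` at a vector of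
weight `n`. -/
theorem fourier_radial {n d : ℕ} (hd : d = 2 * n) (f : ℕ → ℝ) (s : Fin d → ZMod 2)
    (hs : ∑ i, (s i).val = n) :
    ∑ z : Fin d → ZMod 2, (-1 : ℝ) ^ (∑ i, (s i).val * (z i).val) * f (∑ i, (z i).val) =
    ∑ k ∈ range (n + 1), (-1 : ℝ) ^ k * (n.choose k : ℝ) * f (2 * k) := by
  -- the linear functional `X ^ k ↦ f k`
  let L : ℝ[X] →ₗ[ℝ] ℝ := Polynomial.lsum fun k => LinearMap.mulRight ℝ (f k)
  have hL : ∀ k c, L (monomial k c) = c * f k := by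
    intro k c
    simp [L, Polynomial.lsum_apply, Polynomial.sum_monomial_index]
  have h := congrArg L (prod_poly s)
  rw [map_sum, hs, show d - n = n by omega, ← mul_pow] at h
  simp only [hL] at h
  rw [h, show (1 - X : ℝ[X]) * (1 + X) = -X ^ 2 + 1 by ring, add_pow, map_sum]
  refine Finset.sum_congr rfl fun k _ => ?_
  rw [← hL]
  congr 1
  rw [← C_mul_X_pow_eq_monomial, neg_pow, ← pow_mul]
  simp
  ring

theorem sum_even {n d : ℕ} (hd : d = 2 * n) (g : ℕ → ℝ) :
    ∑ i ∈ (range (d + 1)).filter (fun i => Even i), g i = ∑ k ∈ range (n + 1), g (2 * k) := by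
  symm
  refine Finset.sum_nbij' (fun k => 2 * k) (fun i => i / 2) ?_ ?_ ?_ ?_ ?_
  · intro k hk
    simp only [mem_range, mem_filter] at *
    exact ⟨by omega, even_two_mul k⟩
  · intro i hi
    simp only [mem_range, mem_filter] at *
    omega
  · intro k _
    simp
  · intro i hi
    exact Nat.two_mul_div_two_of_even (mem_filter.1 hi).2
  · intros; rfl

/-- The real character `z ↦ (-1)^{⟨s,z⟩}` of `𝔽₂^d`. -/
noncomputable def chi {d : ℕ} (s : Fin d → ZMod 2) : AddChar (Fin d → ZMod 2) ℝ where
  toFun z := (-1 : ℝ) ^ (∑ i, (s i).val * (z i).val)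
  map_zero_eq_one' := by simp
  map_add_eq_mul' x y := by
    simp only [← Finset.prod_pow_eq_pow_sum, ← Finset.prod_mul_distrib]
    refine Finset.prod_congr rfl fun i _ => ?_
    have h : ∀ a b c : ZMod 2, (a.val * (b + c).val) % 2 = (a.val * b.val + a.val * c.val) % 2 := by
      decide
    rw [← pow_add, neg_one_pow_eq_pow_mod_two, Pi.add_apply, h, ← neg_one_pow_eq_pow_mod_two]

theorem chi_apply {d : ℕ} (s z : Fin d → ZMod 2) :
    chi s z = (-1 : ℝ) ^ (∑ i, (s i).val * (z i).val) := rfl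

theorem chi_injective {d : ℕ} : Function.Injective (chi (d := d)) := by
  intro s t h
  funext i
  have hc : ∀ u : Fin d → ZMod 2, chi u (Pi.single i 1) = (-1 : ℝ) ^ (u i).val := by
    intro u
    rw [chi_apply, Finset.sum_eq_single i]
    · simp [ZMod.val_one]
    · intro j _ hj
      simp [hj]
    · simp
  have h' := DFunLike.congr_fun h (Pi.single i 1)
  rw [hc, hc] at h'
  have hs : ∀ t : ZMod 2, t = 0 ∨ t = 1 := by decide
  rcases hs (s i) with h1 | h1 <;> rcases hs (t i) with h2 | h2
  · rw [h1, h2]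
  · norm_num [h1, h2, ZMod.val_one] at h'
  · norm_num [h1, h2, ZMod.val_one] at h'
  · rw [h1, h2]

/-- `⟨σ(x), σ(x + z)⟩ = d - 2 w_H(z)`. -/
theorem inner_sigma {d : ℕ} (x z : Fin d → ZMod 2) :
    ∑ i, (-1 : ℝ) ^ (x i).val * (-1 : ℝ) ^ ((x + z) i).val =
      (d : ℝ) - 2 * ∑ i, ((z i).val : ℝ) := by
  have hs : ∀ t : ZMod 2, t = 0 ∨ t = 1 := by decide
  have h : ∀ i, (-1 : ℝ) ^ (x i).val * (-1 : ℝ) ^ ((x + z) i).val = 1 - 2 * ((z i).val : ℝ) := by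
    intro i
    have h11 : (1 + 1 : ZMod 2) = 0 := by decide
    rcases hs (x i) with h1 | h1 <;> rcases hs (z i) with h2 | h2 <;>
      norm_num [h1, h2, ZMod.val_one, h11]
  rw [Finset.sum_congr rfl fun i _ => h i, Finset.sum_sub_distrib, ← Finset.mul_sum]
  simp

/-- For `d` a positive even integer and `p ≥ 0` (with conventions
`0^p = 0`, `0^0 = 0` implemented by the `if` clauses): for every `s ∈ 𝔽₂^d` of Hamming
weight `d/2`, the Fourier coefficient `Σ_z (−1)^{⟨s,z⟩}|d − 2 w_H(z)|^p` equals
`Σ_{0 ≤ i ≤ d, i even} (−1)^{i/2} C(d/2, i/2) |d − 2i|^p`; consequently the matrix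
`M_{x,y} = |⟨σ(x),σ(y)⟩|^p` has at least `C(d, d/2)` eigenvalues, counted with
multiplicity (i.e. a linearly independent family of that many eigenvectors), whose
absolute value equals the absolute value of that sum. -/
theorem stmt3 (d : ℕ) (hd : 0 < d) (hdeven : Even d) (p : ℝ) (hp : 0 ≤ p)
    (M : Matrix (Fin d → ZMod 2) (Fin d → ZMod 2) ℝ)
    (hM : ∀ x y, M x y =
      if (∑ i, (-1 : ℝ) ^ (x i).val * (-1 : ℝ) ^ (y i).val) = 0 then 0
      else |∑ i, (-1 : ℝ) ^ (x i).val * (-1 : ℝ) ^ (y i).val| ^ p)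
    (Λ₀ : ℝ)
    (hΛ₀ : Λ₀ = ∑ i ∈ (Finset.range (d + 1)).filter (fun i => Even i),
      (-1 : ℝ) ^ (i / 2) * (Nat.choose (d / 2) (i / 2) : ℝ) *
        (if ((d : ℝ) - 2 * i) = 0 then 0 else |(d : ℝ) - 2 * i| ^ p)) :
    (∀ s : Fin d → ZMod 2, (∑ i, (s i).val) = d / 2 →
      (∑ z : Fin d → ZMod 2, (-1 : ℝ) ^ (∑ i, (s i).val * (z i).val) *
          (if ((d : ℝ) - 2 * ∑ i, (z i).val) = 0 then 0
           else |(d : ℝ) - 2 * ∑ i, (z i).val| ^ p)) = Λ₀) ∧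
    ∃ (w : Fin (Nat.choose d (d / 2)) → ((Fin d → ZMod 2) → ℝ))
      (μ : Fin (Nat.choose d (d / 2)) → ℝ),
      LinearIndependent ℝ w ∧
        ∀ j, M.mulVec (w j) = μ j • w j ∧ |μ j| = |Λ₀| := by
  obtain ⟨n, hn⟩ := hdeven
  have hn2 : d = 2 * n := by omega
  have hdn : d / 2 = n := by omega
  have key : ∀ s : Fin d → ZMod 2, (∑ i, (s i).val) = d / 2 →
      (∑ z : Fin d → ZMod 2, (-1 : ℝ) ^ (∑ i, (s i).val * (z i).val) *
          (if ((d : ℝ) - 2 * ∑ i, (z i).val) = 0 then 0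
           else |(d : ℝ) - 2 * ∑ i, (z i).val| ^ p)) = Λ₀ := by
    intro s hs
    have h := fourier_radial hn2
      (fun i => if ((d : ℝ) - 2 * (i : ℝ)) = 0 then 0 else |(d : ℝ) - 2 * i| ^ p) s (hs.trans hdn)
    rw [hΛ₀, sum_even hn2, hdn]
    push_cast at h ⊢
    rw [h]
    refine Finset.sum_congr rfl fun k _ => ?_
    rw [Nat.mul_div_cancel_left k two_pos]
  refine ⟨key, ?_⟩
  -- vectors of weight `d / 2` are enumerated as indicators of the `d / 2`-element subsets
  let e : Fin (d.choose (d / 2)) ≃ powersetCard (d / 2) (univ : Finset (Fin d)) :=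
    (Finset.equivFinOfCardEq (by simp)).symm
  let ind : Finset (Fin d) → (Fin d → ZMod 2) := fun T i => if i ∈ T then 1 else 0
  have hind : Function.Injective ind := by
    intro T U h
    ext i
    have := congrFun h i
    by_cases h1 : i ∈ T <;> by_cases h2 : i ∈ U <;> simp [ind, h1, h2] at this ⊢
  have hwt : ∀ T : Finset (Fin d), ∑ i, (ind T i).val = T.card := by
    intro T
    have : ∀ i, (ind T i).val = if i ∈ T then 1 else 0 := by
      intro i
      by_cases h : i ∈ T <;> simp [ind, h, ZMod.val_one]
    simp [this]
  refine ⟨fun j => chi (ind (e j)), fun _ => Λ₀, ?_, fun j => ⟨?_, rfl⟩⟩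
  · exact (AddChar.linearIndependent (Fin d → ZMod 2) ℝ).comp (fun j => chi (ind (e j)))
      (chi_injective.comp (hind.comp (Subtype.val_injective.comp e.injective)))
  · have hs := key (ind (e j)) ((hwt _).trans (mem_powersetCard.1 (e j).2).2)
    funext x
    simp only [Matrix.mulVec, dotProduct, Pi.smul_apply, smul_eq_mul]
    rw [← Equiv.sum_comp (Equiv.addLeft x), ← hs, Finset.sum_mul]
    refine Finset.sum_congr rfl fun z _ => ?_
    rw [Equiv.coe_addLeft, hM, inner_sigma, AddChar.map_add_eq_mul, chi_apply _ z]
    push_cast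
    ring
end

section
/- Let σ > 0, let n and r ≤ n be positive integers with r divisible by 100, and let Π ∈ ℝ^{n×n} be a matrix satisfying: ‖Π‖_F² = r·σ², the operator norm ‖Π‖₂ ≤ σ, and every row Π_i of Π (viewed as a vector in ℝ^n) satisfies ‖Π_i‖₂ = σ·√(r/n). Then there exist a subset R ⊆ {1,…,n} with |R| = r/100 and a family (v_i)_{i∈R} of pairwise orthogonal vectors in ℝ^n such that for every i ∈ R: (a) Π_i − v_i lies in the linear span of {v_j : j ∈ R, j ≠ i}, and (b) ‖v_i‖₂² ≥ (99/100)·σ²·r/n. -/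
/-!
The rows are chosen greedily while running Gram–Schmidt.  If orthogonal nonzero vectors `v j`,
`j ∈ R`, have been produced with `|R| < r / 100`, let `P` be the orthogonal projection onto their
span.  Summing over all rows, `∑ i, ‖P Π_i‖² = ∑ j ∈ R, ‖Π v_j‖² / ‖v_j‖² ≤ |R| σ²` by the bound on
the operator norm, so some row has `‖P Π_i‖² ≤ |R| σ² / n ≤ σ² r / (100 n)`.  Its residual
`Π_i - P Π_i` then has squared norm at least `(99/100) σ² r / n`.  In particular it is nonzero, so
`Π_i` is outside the span, hence `i ∉ R` and `R` grows.
-/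

section GramSchmidt

variable {n : ℕ}

/-- The Gram–Schmidt residual of `x` with respect to the family `v j`, `j ∈ R`. It is the component
of `x` orthogonal to their span when the `v j` are nonzero and pairwise orthogonal. -/
noncomputable def gsResidual (R : Finset (Fin n)) (v : Fin n → Fin n → ℝ) (x : Fin n → ℝ) :
    Fin n → ℝ :=
  x - ∑ j ∈ R, ((x ⬝ᵥ v j) / (v j ⬝ᵥ v j)) • v j

lemma gsResidual_dot {R : Finset (Fin n)} {v : Fin n → Fin n → ℝ}
    (horth : ∀ i ∈ R, ∀ j ∈ R, i ≠ j → v i ⬝ᵥ v j = 0)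
    (hne : ∀ i ∈ R, v i ⬝ᵥ v i ≠ 0) (x : Fin n → ℝ) {k : Fin n} (hk : k ∈ R) :
    gsResidual R v x ⬝ᵥ v k = 0 := by
  rw [gsResidual, sub_dotProduct, sum_dotProduct, Finset.sum_eq_single_of_mem k hk]
  · rw [smul_dotProduct, smul_eq_mul, div_mul_cancel₀ _ (hne k hk), sub_self]
  · intro j hj hjk
    rw [smul_dotProduct, horth j hj k hk hjk, smul_zero]

lemma sub_gsResidual_mem (R : Finset (Fin n)) (v : Fin n → Fin n → ℝ) (x : Fin n → ℝ) :
    x - gsResidual R v x ∈ Submodule.span ℝ (v '' (R : Set (Fin n))) := by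
  rw [gsResidual, sub_sub_cancel]
  exact Submodule.sum_mem _ fun j hj =>
    Submodule.smul_mem _ _ (Submodule.subset_span ⟨j, hj, rfl⟩)

lemma dot_eq_zero_of_mem_span {S : Set (Fin n → ℝ)} {w x : Fin n → ℝ}
    (h : ∀ y ∈ S, w ⬝ᵥ y = 0) (hx : x ∈ Submodule.span ℝ S) : w ⬝ᵥ x = 0 := by
  induction hx using Submodule.span_induction with
  | mem y hy => exact h y hy
  | zero => exact dotProduct_zero w
  | add a b _ _ ha hb => rw [dotProduct_add, ha, hb, add_zero]
  | smul c a _ ha => rw [dotProduct_smul, ha, smul_zero]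

lemma gsResidual_dot_of_mem_span {R : Finset (Fin n)} {v : Fin n → Fin n → ℝ}
    (horth : ∀ i ∈ R, ∀ j ∈ R, i ≠ j → v i ⬝ᵥ v j = 0)
    (hne : ∀ i ∈ R, v i ⬝ᵥ v i ≠ 0) (x : Fin n → ℝ) {y : Fin n → ℝ}
    (hy : y ∈ Submodule.span ℝ (v '' (R : Set (Fin n)))) :
    gsResidual R v x ⬝ᵥ y = 0 := by
  refine dot_eq_zero_of_mem_span ?_ hy
  rintro _ ⟨j, hj, rfl⟩
  exact gsResidual_dot horth hne x hj

/-- Pythagoras, with the squared norm of the projection written out by Parseval's identity. -/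
lemma gsResidual_dot_self {R : Finset (Fin n)} {v : Fin n → Fin n → ℝ}
    (horth : ∀ i ∈ R, ∀ j ∈ R, i ≠ j → v i ⬝ᵥ v j = 0)
    (hne : ∀ i ∈ R, v i ⬝ᵥ v i ≠ 0) (x : Fin n → ℝ) :
    gsResidual R v x ⬝ᵥ gsResidual R v x
      = x ⬝ᵥ x - ∑ j ∈ R, (x ⬝ᵥ v j) ^ 2 / (v j ⬝ᵥ v j) := by
  have h := gsResidual_dot_of_mem_span horth hne x (sub_gsResidual_mem R v x)
  rw [dotProduct_sub, sub_eq_zero] at h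
  rw [← h, gsResidual, sub_dotProduct, sum_dotProduct]
  congr 1
  refine Finset.sum_congr rfl fun j _ => ?_
  rw [smul_dotProduct, smul_eq_mul, dotProduct_comm (v j) x]
  ring

/-- For orthogonal nonzero `v j`, some row of a matrix with `‖A x‖² ≤ s ‖x‖²` has a projection onto
their span of squared norm at most the average bound `|R| s / n`. -/
lemma exists_row_small_projection (hn : 0 < n) {s : ℝ} (A : Matrix (Fin n) (Fin n) ℝ)
    (hA : ∀ x, A.mulVec x ⬝ᵥ A.mulVec x ≤ s * (x ⬝ᵥ x))
    {R : Finset (Fin n)} {v : Fin n → Fin n → ℝ} (hpos : ∀ i ∈ R, 0 < v i ⬝ᵥ v i) :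
    ∃ i, ∑ j ∈ R, (A i ⬝ᵥ v j) ^ 2 / (v j ⬝ᵥ v j) ≤ R.card * s / n := by
  have hn' : (0 : ℝ) < n := by exact_mod_cast hn
  have htot : ∑ i, ∑ j ∈ R, (A i ⬝ᵥ v j) ^ 2 / (v j ⬝ᵥ v j)
      ≤ ∑ _i : Fin n, R.card * s / n := by
    rw [Finset.sum_comm]
    calc ∑ j ∈ R, ∑ i, (A i ⬝ᵥ v j) ^ 2 / (v j ⬝ᵥ v j)
        ≤ ∑ _j ∈ R, s := by
          refine Finset.sum_le_sum fun j hj => ?_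
          rw [← Finset.sum_div, div_le_iff₀ (hpos j hj)]
          refine le_trans (le_of_eq ?_) (hA (v j))
          exact Finset.sum_congr rfl fun i _ => sq _
      _ = ∑ _i : Fin n, R.card * s / n := by
          simp only [Finset.sum_const, nsmul_eq_mul, Finset.card_univ, Fintype.card_fin]
          field_simp
  have : Nonempty (Fin n) := ⟨⟨0, hn⟩⟩
  obtain ⟨i, -, hi⟩ := Finset.exists_le_of_sum_le Finset.univ_nonempty htot
  exact ⟨i, hi⟩

/-- The greedy selection, carried out for `k` steps, where `c` is the common squared norm of the
rows. -/
lemma exists_greedy (hn : 0 < n) {s c : ℝ} (hs : 0 ≤ s) (hc : 0 < c)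
    (A : Matrix (Fin n) (Fin n) ℝ)
    (hA : ∀ x, A.mulVec x ⬝ᵥ A.mulVec x ≤ s * (x ⬝ᵥ x)) (hrow : ∀ i, A i ⬝ᵥ A i = c) (k : ℕ)
    (hk : k * s / n ≤ c / 100) :
    ∃ (R : Finset (Fin n)) (v : Fin n → (Fin n → ℝ)),
      R.card = k ∧
      (∀ i ∈ R, ∀ j ∈ R, i ≠ j → v i ⬝ᵥ v j = 0) ∧
      (∀ i ∈ R, A i - v i ∈ Submodule.span ℝ (v '' ((R : Set (Fin n)) \ {i})) ∧
        99 / 100 * c ≤ v i ⬝ᵥ v i) := by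
  induction k with
  | zero => exact ⟨∅, 0, by simp⟩
  | succ k ih =>
    have hk' : k * s / n ≤ c / 100 := by
      refine le_trans ?_ hk
      gcongr
      exact Nat.le_succ k
    obtain ⟨R, v, hcard, horth, hR⟩ := ih hk'
    have hpos : ∀ i ∈ R, 0 < v i ⬝ᵥ v i := fun i hi =>
      lt_of_lt_of_le (by positivity) (hR i hi).2
    have hne : ∀ i ∈ R, v i ⬝ᵥ v i ≠ 0 := fun i hi => (hpos i hi).ne'
    obtain ⟨i, hi⟩ := exists_row_small_projection hn A hA hpos
    rw [hcard] at hi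
    set w := gsResidual R v (A i) with hw
    have hwn : 99 / 100 * c ≤ w ⬝ᵥ w := by
      rw [hw, gsResidual_dot_self horth hne, hrow]
      linarith
    have hwspan : A i - w ∈ Submodule.span ℝ (v '' (R : Set (Fin n))) :=
      sub_gsResidual_mem R v (A i)
    have hwo : ∀ j ∈ R, w ⬝ᵥ v j = 0 := fun j hj => gsResidual_dot horth hne _ hj
    have hiR : i ∉ R := by
      intro hmem
      -- Otherwise `w` lies in the span of the `v j`, to which it is orthogonal, so `w = 0`.
      have hAi : A i ∈ Submodule.span ℝ (v '' (R : Set (Fin n))) := by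
        have h1 := Submodule.span_mono (Set.image_mono Set.sdiff_subset) (hR i hmem).1
        have h2 : v i ∈ Submodule.span ℝ (v '' (R : Set (Fin n))) :=
          Submodule.subset_span ⟨i, hmem, rfl⟩
        simpa using Submodule.add_mem _ h1 h2
      have hwmem : w ∈ Submodule.span ℝ (v '' (R : Set (Fin n))) := by
        simpa using Submodule.sub_mem _ hAi hwspan
      have := gsResidual_dot_of_mem_span horth hne (A i) hwmem
      rw [← hw] at this
      linarith
    have hupd : ∀ j ∈ R, Function.update v i w j = v j := fun j hj =>
      Function.update_of_ne (ne_of_mem_of_not_mem hj hiR) _ _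
    have hself : Function.update v i w i = w := Function.update_self ..
    refine ⟨insert i R, Function.update v i w, ?_, ?_, ?_⟩
    · rw [Finset.card_insert_of_notMem hiR, hcard]
    · intro a ha b hb hab
      rcases Finset.mem_insert.1 ha with rfl | ha' <;> rcases Finset.mem_insert.1 hb with rfl | hb'
      · exact absurd rfl hab
      · rw [hself, hupd b hb', hwo b hb']
      · rw [hself, hupd a ha', dotProduct_comm, hwo a ha']
      · rw [hupd a ha', hupd b hb', horth a ha' b hb' hab]
    · intro a ha
      rcases Finset.mem_insert.1 ha with rfl | ha
      · rw [hself]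
        refine ⟨Submodule.span_mono ?_ hwspan, hwn⟩
        rintro _ ⟨j, hj, rfl⟩
        exact ⟨j, ⟨Finset.mem_insert_of_mem hj, ne_of_mem_of_not_mem hj hiR⟩, hupd j hj⟩
      · rw [hupd a ha]
        refine ⟨Submodule.span_mono ?_ (hR a ha).1, (hR a ha).2⟩
        rintro _ ⟨j, ⟨hj, hja⟩, rfl⟩
        exact ⟨j, ⟨Finset.mem_insert_of_mem hj, hja⟩, hupd j hj⟩

end GramSchmidt

/-- Let `Π ∈ ℝ^{n×n}` have Frobenius norm squared `r σ²`, operator norm at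
most `σ`, and all rows of Euclidean norm `σ√(r/n)` (with `100 ∣ r`, `r ≤ n`).  Then there are
a subset `R` of the rows with `|R| = r/100` and pairwise orthogonal vectors `(v_i)_{i∈R}` such
that for every `i ∈ R`, `Π_i − v_i` lies in the span of `{v_j : j ∈ R, j ≠ i}` and
`‖v_i‖₂² ≥ (99/100) σ² r/n`. -/
theorem stmt5 (n r : ℕ) (hn : 0 < n) (hr : 0 < r) (hrn : r ≤ n) (hr100 : 100 ∣ r)
    (σ : ℝ) (hσ : 0 < σ) (Pm : Matrix (Fin n) (Fin n) ℝ)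
    (hfrob : (∑ i, ∑ j, (Pm i j) ^ 2) = r * σ ^ 2)
    (hop : ∀ x : Fin n → ℝ,
      Real.sqrt (∑ i, (Pm.mulVec x i) ^ 2) ≤ σ * Real.sqrt (∑ i, (x i) ^ 2))
    (hrows : ∀ i : Fin n, (∑ j, (Pm i j) ^ 2) = σ ^ 2 * (r / n)) :
    ∃ (R : Finset (Fin n)) (v : Fin n → (Fin n → ℝ)),
      R.card = r / 100 ∧
      (∀ i ∈ R, ∀ j ∈ R, i ≠ j → (∑ t, v i t * v j t) = 0) ∧
      (∀ i ∈ R,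
        ((fun t => Pm i t - v i t) ∈
          Submodule.span ℝ (v '' ((R : Set (Fin n)) \ {i}))) ∧
        (99 / 100 : ℝ) * σ ^ 2 * r / n ≤ ∑ t, (v i t) ^ 2) := by
  have hn' : (0 : ℝ) < n := by exact_mod_cast hn
  have hr' : (0 : ℝ) < r := by exact_mod_cast hr
  have hA : ∀ x, Pm.mulVec x ⬝ᵥ Pm.mulVec x ≤ σ ^ 2 * (x ⬝ᵥ x) := by
    intro x
    have h := pow_le_pow_left₀ (Real.sqrt_nonneg _) (hop x) 2
    rw [mul_pow, Real.sq_sqrt (by positivity), Real.sq_sqrt (by positivity)] at h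
    simpa only [dotProduct, sq] using h
  have hrow : ∀ i, Pm i ⬝ᵥ Pm i = σ ^ 2 * (r / n) := by
    intro i
    rw [← hrows i]
    exact Finset.sum_congr rfl fun j _ => (sq _).symm
  have hk : ((r / 100 : ℕ) : ℝ) * σ ^ 2 / n ≤ σ ^ 2 * (r / n) / 100 := by
    rw [Nat.cast_div hr100 (by norm_num)]
    apply le_of_eq
    push_cast
    ring
  obtain ⟨R, v, hcard, horth, hR⟩ :=
    exists_greedy hn (sq_nonneg σ) (by positivity) Pm hA hrow (r / 100) hk
  refine ⟨R, v, hcard, horth, fun i hi => ⟨(hR i hi).1, ?_⟩⟩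
  calc (99 / 100 : ℝ) * σ ^ 2 * r / n = 99 / 100 * (σ ^ 2 * (r / n)) := by ring
    _ ≤ v i ⬝ᵥ v i := (hR i hi).2
    _ = ∑ t, (v i t) ^ 2 := Finset.sum_congr rfl fun t _ => (sq _).symm
end

section
/- Let p ≥ 1, C ≥ 1, γ > 0, let d be a positive integer, and let S ⊆ {−1,1}^d be a set such that |⟨s,t⟩| ≤ γ·√d for all distinct s, t ∈ S. Let R be a positive integer with R < d^{p/2}/(γ^p · C^p). For a subset S' ⊆ S of size R, let M_{S'} ∈ ℝ^{R×d} denote a matrix whose rows are exactly the elements of S'. Then for any two distinct subsets S₁, S₂ ⊆ S of size R, there exists x ∈ S such that either (‖M_{S₁} x‖_p ≥ d and ‖M_{S₂} x‖_p < d/C) or (‖M_{S₂} x‖_p ≥ d and ‖M_{S₁} x‖_p < d/C). Moreover, if |S| ≥ e·R, then the number of size-R subsets of S is at least e^R. -/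
open Finset Real

/-!
Two distinct subsets of the same size `R` admit some `x ∈ S₁ \ S₂`, and this `x` is the
distinguishing query. The row `x` of `M_{S₁}` alone contributes `|⟨x,x⟩|^p = d^p`, while every row
of `M_{S₂}` differs from `x`, so the `p`-th power of `‖M_{S₂} x‖_p` is at most
`R (γ√d)^p = R γ^p d^{p/2} < (d/C)^p` (`norm_ge_of_mem`, `norm_lt_of_notMem`).
The counting bound is `(n/k)^k ≤ n.choose k` (`div_pow_le_choose`) with `n/k ≥ e`.
-/

/-- Induction via `(n+1).choose (k+1) = (n+1)/(k+1) * n.choose k` and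
`(n+1)/(k+1) ≤ n/k`. For `k = 0` the junk value `n / 0 = 0` is harmless, as `0 ^ 0 = 1`. -/
lemma div_pow_le_choose (k : ℕ) : ∀ n : ℕ, k ≤ n → ((n : ℝ) / k) ^ k ≤ (n.choose k : ℝ) := by
  induction k with
  | zero => intro n _; simp
  | succ k ih =>
    intro n hn
    obtain ⟨m, rfl⟩ : ∃ m, n = m + 1 := ⟨n - 1, by omega⟩
    have hkm : k ≤ m := by omega
    have hkm' : (k : ℝ) ≤ m := by exact_mod_cast hkm
    have hchoose : ((m + 1).choose (k + 1) : ℝ) = ((m : ℝ) + 1) / (k + 1) * m.choose k := by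
      have h : ((m + 1 : ℕ) : ℝ) * m.choose k = (m + 1).choose (k + 1) * ((k + 1 : ℕ) : ℝ) := by
        exact_mod_cast Nat.add_one_mul_choose_eq m k
      push_cast at h
      field_simp
      linarith
    have hpow : (((m : ℝ) + 1) / (k + 1)) ^ k ≤ ((m : ℝ) / k) ^ k := by
      rcases Nat.eq_zero_or_pos k with rfl | hk
      · simp
      · have hk' : (0 : ℝ) < k := by exact_mod_cast hk
        apply pow_le_pow_left₀ (by positivity)
        rw [div_le_div_iff₀ (by positivity) hk']
        nlinarith
    rw [hchoose, pow_succ']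
    push_cast
    exact mul_le_mul_of_nonneg_left (hpow.trans (ih m hkm)) (by positivity)

lemma norm_ge_of_mem {p : ℝ} (hp : 1 ≤ p) {d : ℕ} {T : Finset (Fin d → ℝ)} {x : Fin d → ℝ}
    (hx : ∀ i, x i = 1 ∨ x i = -1) (hxT : x ∈ T) :
    (d : ℝ) ≤ (∑ s ∈ T, |∑ i, s i * x i| ^ p) ^ (1 / p) := by
  have hxx : ∑ i, x i * x i = (d : ℝ) := by
    have h : ∀ i, x i * x i = 1 := fun i => by rcases hx i with h | h <;> simp [h]
    simp [h]
  have hle : |∑ i, x i * x i| ^ p ≤ ∑ s ∈ T, |∑ i, s i * x i| ^ p :=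
    Finset.single_le_sum (f := fun s : Fin d → ℝ => |∑ i, s i * x i| ^ p)
      (fun s _ => by positivity) hxT
  rw [hxx, abs_of_nonneg (Nat.cast_nonneg d)] at hle
  rw [one_div, Real.le_rpow_inv_iff_of_pos (Nat.cast_nonneg d)
    (Finset.sum_nonneg fun s _ => by positivity) (by linarith)]
  exact hle

lemma norm_lt_of_notMem {p C γ : ℝ} (hp : 1 ≤ p) (hC : 1 ≤ C) (hγ : 0 < γ) {d : ℕ} (hd : 0 < d)
    {S T : Finset (Fin d → ℝ)}
    (hS2 : ∀ s ∈ S, ∀ t ∈ S, s ≠ t → |∑ i, s i * t i| ≤ γ * Real.sqrt d)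
    (hT : (T.card : ℝ) < (d : ℝ) ^ (p / 2) / (γ ^ p * C ^ p)) (hTS : T ⊆ S)
    {x : Fin d → ℝ} (hxS : x ∈ S) (hxT : x ∉ T) :
    (∑ s ∈ T, |∑ i, s i * x i| ^ p) ^ (1 / p) < (d : ℝ) / C := by
  have hd' : (0 : ℝ) < d := by exact_mod_cast hd
  have hC' : 0 < C := by linarith
  have hsum : ∑ s ∈ T, |∑ i, s i * x i| ^ p ≤ T.card * (γ ^ p * (d : ℝ) ^ (p / 2)) := by
    rw [← nsmul_eq_mul]
    refine Finset.sum_le_card_nsmul _ _ _ fun s hs => ?_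
    have hsx : s ≠ x := fun h => hxT (h ▸ hs)
    calc |∑ i, s i * x i| ^ p ≤ (γ * Real.sqrt d) ^ p :=
          Real.rpow_le_rpow (abs_nonneg _) (hS2 s (hTS hs) x hxS hsx) (by linarith)
      _ = γ ^ p * (d : ℝ) ^ (p / 2) := by
          rw [Real.mul_rpow hγ.le (Real.sqrt_nonneg _), Real.sqrt_eq_rpow, ← Real.rpow_mul hd'.le]
          congr 2
          ring
  rw [one_div, Real.rpow_inv_lt_iff_of_pos (Finset.sum_nonneg fun s _ => by positivity)
    (by positivity) (by linarith), Real.div_rpow hd'.le hC'.le]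
  refine hsum.trans_lt ?_
  have hγp : 0 < γ ^ p := Real.rpow_pos_of_pos hγ p
  have hCp : 0 < C ^ p := Real.rpow_pos_of_pos hC' p
  have hdp : 0 < (d : ℝ) ^ (p / 2) := Real.rpow_pos_of_pos hd' _
  have hsplit : (d : ℝ) ^ p = (d : ℝ) ^ (p / 2) * (d : ℝ) ^ (p / 2) := by
    rw [← Real.rpow_add hd', add_halves]
  rw [lt_div_iff₀ (by positivity)] at hT
  rw [lt_div_iff₀ hCp, hsplit]
  calc (T.card : ℝ) * (γ ^ p * (d : ℝ) ^ (p / 2)) * C ^ p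
      = T.card * (γ ^ p * C ^ p) * (d : ℝ) ^ (p / 2) := by ring
    _ < _ := mul_lt_mul_of_pos_right hT hdp

/-- Let `S ⊆ {−1,1}^d` with `|⟨s,t⟩| ≤ γ√d` for distinct `s, t ∈ S`, and let
`R < d^{p/2}/(γ^p C^p)`.  For a size-`R` subset `S' ⊆ S`, the quantity
`(Σ_{s∈S'} |⟨s,x⟩|^p)^{1/p}` equals `‖M_{S'} x‖_p` for any matrix `M_{S'}` whose rows are
exactly the elements of `S'`.  Then any two distinct size-`R` subsets `S₁, S₂ ⊆ S` are
distinguished by some `x ∈ S`, and if `|S| ≥ e·R` the number of size-`R` subsets of `S` is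
at least `e^R`. -/
theorem stmt7 (p C γ : ℝ) (hp : 1 ≤ p) (hC : 1 ≤ C) (hγ : 0 < γ)
    (d : ℕ) (hd : 0 < d) (S : Finset (Fin d → ℝ))
    (hS1 : ∀ s ∈ S, ∀ i, s i = 1 ∨ s i = -1)
    (hS2 : ∀ s ∈ S, ∀ t ∈ S, s ≠ t → |∑ i, s i * t i| ≤ γ * Real.sqrt d)
    (R : ℕ) (hR : 0 < R) (hRlt : (R : ℝ) < (d : ℝ) ^ (p / 2) / (γ ^ p * C ^ p)) :
    (∀ S₁ ⊆ S, ∀ S₂ ⊆ S, S₁.card = R → S₂.card = R → S₁ ≠ S₂ →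
      ∃ x ∈ S,
        (((∑ s ∈ S₁, |∑ i, s i * x i| ^ p) ^ (1 / p) ≥ (d : ℝ) ∧
            (∑ s ∈ S₂, |∑ i, s i * x i| ^ p) ^ (1 / p) < (d : ℝ) / C) ∨
         ((∑ s ∈ S₂, |∑ i, s i * x i| ^ p) ^ (1 / p) ≥ (d : ℝ) ∧
            (∑ s ∈ S₁, |∑ i, s i * x i| ^ p) ^ (1 / p) < (d : ℝ) / C))) ∧
    ((S.card : ℝ) ≥ Real.exp 1 * R → (Nat.choose S.card R : ℝ) ≥ Real.exp R) := by
  refine ⟨fun S₁ h₁ S₂ h₂ hc₁ hc₂ hne => ?_, fun hcard => ?_⟩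
  · obtain ⟨x, hx₁, hx₂⟩ : ∃ x ∈ S₁, x ∉ S₂ := by
      by_contra! h
      exact hne (Finset.eq_of_subset_of_card_le h (by omega))
    exact ⟨x, h₁ hx₁, Or.inl ⟨norm_ge_of_mem hp (hS1 x (h₁ hx₁)) hx₁,
      norm_lt_of_notMem hp hC hγ hd hS2 (by rwa [hc₂]) h₂ (h₁ hx₁) hx₂⟩⟩
  · have hR' : (0 : ℝ) < R := by exact_mod_cast hR
    have hle : R ≤ S.card := by
      have h : (R : ℝ) ≤ S.card := by nlinarith [Real.add_one_le_exp (1 : ℝ)]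
      exact_mod_cast h
    calc Real.exp R = Real.exp 1 ^ R := by rw [← Real.exp_nat_mul, mul_one]
      _ ≤ ((S.card : ℝ) / R) ^ R :=
          pow_le_pow_left₀ (Real.exp_pos 1).le ((le_div_iff₀ hR').2 hcard) R
      _ ≤ (S.card.choose R : ℝ) := div_pow_le_choose R _ hle
end

section
/- Let p, q ≥ 1, ε ∈ (0,1), κ ≥ 1, and let N, n, d be positive integers. Let A ∈ ℝ^{N×d} satisfy (1/κ)·‖x‖₂ ≤ ‖Ax‖₂ ≤ ‖x‖₂ for all x ∈ ℝ^d, and let B ∈ ℝ^{n×d} satisfy ‖Ax‖_p ≤ ‖Bx‖_q ≤ (1+ε)·‖Ax‖_p for all x ∈ ℝ^d. Set D₁ = max{1, N^{1/2 − 1/p}} and δ = ε/(D₁ · n^{1/q} · d^{1/2} · κ). Then every matrix B̃ ∈ ℝ^{n×d} with |B̃_{ij} − B_{ij}| ≤ δ for all i, j satisfies (1−ε)·‖Ax‖_p ≤ ‖B̃x‖_q ≤ (1+ε)²·‖Ax‖_p for all x ∈ ℝ^d. -/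
open Finset Matrix Real

/-!
Put `E = B' - B`. Every entry of `E` is at most `δ` in absolute value, so every coordinate of
`E x` is at most `δ ‖x‖₁ ≤ δ √d ‖x‖₂`, and hence `‖E x‖_q ≤ n^{1/q} δ √d ‖x‖₂`. Since
`‖x‖₂ ≤ κ ‖A x‖₂` and `‖A x‖₂ ≤ D₁ ‖A x‖_p`, the choice of `δ` gives `‖E x‖_q ≤ ε ‖A x‖_p`.
Minkowski's inequality for `‖·‖_q`, applied to `B' x = B x + E x` and to `B x = B' x - E x`, then
yields both bounds, the upper one because `1 + 2ε ≤ (1 + ε)²`.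

The comparison `‖y‖₂ ≤ D₁ ‖y‖_p` on `ℝ^N` is monotonicity of `ℓ^p` norms for `p ≤ 2` and the power
mean inequality for `p ≥ 2`.
-/

lemma l2_le_lp_of_le_two {N : ℕ} {p : ℝ} (hp : 1 ≤ p) (hp2 : p ≤ 2) (y : Fin N → ℝ) :
    Real.sqrt (∑ i, (y i) ^ 2) ≤ (∑ i, |y i| ^ p) ^ (1 / p) := by
  have hp0 : 0 < p := by linarith
  have hM : 0 ≤ ∑ i, |y i| ^ p := Finset.sum_nonneg fun i _ => by positivity
  set T := (∑ i, |y i| ^ p) ^ (1 / p) with hT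
  have hT0 : 0 ≤ T := by positivity
  have hTp : T ^ p = ∑ i, |y i| ^ p := by
    rw [hT, ← Real.rpow_mul hM, one_div_mul_cancel hp0.ne', Real.rpow_one]
  have hle : ∀ i, |y i| ≤ T := fun i => by
    rw [← Real.rpow_le_rpow_iff (abs_nonneg _) hT0 hp0, hTp]
    exact Finset.single_le_sum (f := fun i => |y i| ^ p) (fun j _ => by positivity)
      (Finset.mem_univ i)
  have hsplit : ∀ t : ℝ, 0 ≤ t → t ^ p * t ^ (2 - p) = t ^ 2 := fun t ht => by
    rw [← Real.rpow_add_of_nonneg ht hp0.le (by linarith), add_sub_cancel, Real.rpow_two]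
  rw [Real.sqrt_le_left hT0]
  calc ∑ i, (y i) ^ 2 = ∑ i, |y i| ^ p * |y i| ^ (2 - p) :=
        Finset.sum_congr rfl fun i _ => by rw [hsplit _ (abs_nonneg _), sq_abs]
    _ ≤ ∑ i, |y i| ^ p * T ^ (2 - p) := Finset.sum_le_sum fun i _ =>
        mul_le_mul_of_nonneg_left
          (Real.rpow_le_rpow (abs_nonneg _) (hle i) (by linarith)) (by positivity)
    _ = T ^ 2 := by rw [← Finset.sum_mul, ← hTp, hsplit T hT0]

lemma l2_le_lp_of_two_le {N : ℕ} {p : ℝ} (hp2 : 2 ≤ p) (y : Fin N → ℝ) :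
    Real.sqrt (∑ i, (y i) ^ 2) ≤
      (N : ℝ) ^ ((1 : ℝ) / 2 - 1 / p) * (∑ i, |y i| ^ p) ^ (1 / p) := by
  have hp0 : 0 < p := by linarith
  have hM : 0 ≤ ∑ i, |y i| ^ p := Finset.sum_nonneg fun i _ => by positivity
  have hS : 0 ≤ ∑ i, (y i) ^ 2 := Finset.sum_nonneg fun i _ => by positivity
  -- power mean inequality with exponent `p / 2` for the numbers `(y i) ^ 2`
  have h := Real.rpow_sum_le_const_mul_sum_rpow_of_nonneg Finset.univ (f := fun i => (y i) ^ 2)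
    (p := p / 2) (by linarith) (fun i _ => by positivity)
  have hpow : ∀ i, ((y i) ^ 2) ^ (p / 2) = |y i| ^ p := fun i => by
    rw [← sq_abs, ← Real.rpow_two, ← Real.rpow_mul (abs_nonneg _)]
    congr 1
    ring
  simp only [hpow, Finset.card_univ, Fintype.card_fin] at h
  have h' := Real.rpow_le_rpow (by positivity) h (z := 1 / p) (by positivity)
  rw [← Real.rpow_mul hS, Real.mul_rpow (by positivity) hM,
    ← Real.rpow_mul (Nat.cast_nonneg N)] at h'
  rw [Real.sqrt_eq_rpow]
  convert h' using 2
  · field_simp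
  · congr 1
    field_simp

lemma l2_le_max_mul_lp {N : ℕ} {p : ℝ} (hp : 1 ≤ p) (y : Fin N → ℝ) :
    Real.sqrt (∑ i, (y i) ^ 2) ≤
      max 1 ((N : ℝ) ^ ((1 : ℝ) / 2 - 1 / p)) * (∑ i, |y i| ^ p) ^ (1 / p) := by
  have hT : 0 ≤ (∑ i, |y i| ^ p) ^ (1 / p) :=
    Real.rpow_nonneg (Finset.sum_nonneg fun i _ => by positivity) _
  rcases le_total p 2 with h | h
  · exact (l2_le_lp_of_le_two hp h y).trans (le_mul_of_one_le_left hT (le_max_left _ _))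
  · exact (l2_le_lp_of_two_le h y).trans (mul_le_mul_of_nonneg_right (le_max_right _ _) hT)

lemma lq_le_of_abs_le {n : ℕ} {q c : ℝ} (hq : 1 ≤ q) (hc : 0 ≤ c) (y : Fin n → ℝ)
    (h : ∀ i, |y i| ≤ c) : (∑ i, |y i| ^ q) ^ (1 / q) ≤ (n : ℝ) ^ (1 / q) * c := by
  have hq0 : 0 < q := by linarith
  calc (∑ i, |y i| ^ q) ^ (1 / q) ≤ (∑ _i : Fin n, c ^ q) ^ (1 / q) :=
        Real.rpow_le_rpow (Finset.sum_nonneg fun i _ => by positivity)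
          (Finset.sum_le_sum fun i _ => Real.rpow_le_rpow (abs_nonneg _) (h i) hq0.le)
          (by positivity)
    _ = (n : ℝ) ^ (1 / q) * c := by
        rw [Finset.sum_const, Finset.card_univ, Fintype.card_fin, nsmul_eq_mul,
          Real.mul_rpow (by positivity) (by positivity), ← Real.rpow_mul hc,
          mul_one_div_cancel hq0.ne', Real.rpow_one]

lemma abs_mulVec_le {n d : ℕ} {δ : ℝ} (hδ : 0 ≤ δ) (E : Matrix (Fin n) (Fin d) ℝ)
    (hE : ∀ i j, |E i j| ≤ δ) (x : Fin d → ℝ) (i : Fin n) :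
    |E.mulVec x i| ≤ δ * ((d : ℝ) ^ ((1 : ℝ) / 2) * Real.sqrt (∑ j, (x j) ^ 2)) := by
  have h1 : ∑ j, |x j| ≤ (d : ℝ) ^ ((1 : ℝ) / 2) * Real.sqrt (∑ j, (x j) ^ 2) := by
    rw [← Real.sqrt_eq_rpow, ← Real.sqrt_mul (Nat.cast_nonneg d)]
    apply Real.le_sqrt_of_sq_le
    simpa using sq_sum_le_card_mul_sum_sq (s := Finset.univ) (f := fun j => |x j|)
  calc |E.mulVec x i| ≤ ∑ j, |E i j * x j| :=
        Finset.abs_sum_le_sum_abs (fun j => E i j * x j) Finset.univ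
    _ ≤ ∑ j, δ * |x j| := Finset.sum_le_sum fun j _ => by
        rw [abs_mul]
        exact mul_le_mul_of_nonneg_right (hE i j) (abs_nonneg _)
    _ = δ * ∑ j, |x j| := by rw [Finset.mul_sum]
    _ ≤ _ := mul_le_mul_of_nonneg_left h1 hδ

/-- Rounding the entries of `B` to precision
`δ = ε/(D₁ n^{1/q} d^{1/2} κ)`, with `D₁ = max{1, N^{1/2−1/p}}`, preserves the sketch
guarantee: if `(1/κ)‖x‖₂ ≤ ‖Ax‖₂ ≤ ‖x‖₂` and `‖Ax‖_p ≤ ‖Bx‖_q ≤ (1+ε)‖Ax‖_p` for all `x`,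
then every `B̃` with `|B̃_{ij} − B_{ij}| ≤ δ` satisfies
`(1−ε)‖Ax‖_p ≤ ‖B̃x‖_q ≤ (1+ε)²‖Ax‖_p` for all `x`. -/
theorem stmt11 (p q ε κ : ℝ) (hp : 1 ≤ p) (hq : 1 ≤ q) (hε : 0 < ε) (hε1 : ε < 1)
    (hκ : 1 ≤ κ) (N n d : ℕ) (hN : 0 < N) (hn : 0 < n) (hd : 0 < d)
    (A : Matrix (Fin N) (Fin d) ℝ)
    (hA : ∀ x : Fin d → ℝ,
      (1 / κ) * Real.sqrt (∑ j, (x j) ^ 2) ≤ Real.sqrt (∑ i, (A.mulVec x i) ^ 2) ∧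
        Real.sqrt (∑ i, (A.mulVec x i) ^ 2) ≤ Real.sqrt (∑ j, (x j) ^ 2))
    (B : Matrix (Fin n) (Fin d) ℝ)
    (hB : ∀ x : Fin d → ℝ,
      (∑ i, |A.mulVec x i| ^ p) ^ (1 / p) ≤ (∑ i, |B.mulVec x i| ^ q) ^ (1 / q) ∧
        (∑ i, |B.mulVec x i| ^ q) ^ (1 / q) ≤ (1 + ε) * (∑ i, |A.mulVec x i| ^ p) ^ (1 / p))
    (D₁ δ : ℝ) (hD₁ : D₁ = max 1 ((N : ℝ) ^ ((1 : ℝ) / 2 - 1 / p)))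
    (hδ : δ = ε / (D₁ * (n : ℝ) ^ (1 / q) * (d : ℝ) ^ ((1 : ℝ) / 2) * κ))
    (B' : Matrix (Fin n) (Fin d) ℝ) (hB' : ∀ i j, |B' i j - B i j| ≤ δ) :
    ∀ x : Fin d → ℝ,
      (1 - ε) * (∑ i, |A.mulVec x i| ^ p) ^ (1 / p) ≤ (∑ i, |B'.mulVec x i| ^ q) ^ (1 / q) ∧
        (∑ i, |B'.mulVec x i| ^ q) ^ (1 / q) ≤
          (1 + ε) ^ 2 * (∑ i, |A.mulVec x i| ^ p) ^ (1 / p) := by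
  intro x
  have hD : 1 ≤ D₁ := hD₁ ▸ le_max_left _ _
  have hD0 : 0 < D₁ := by linarith
  have hκ0 : 0 < κ := by linarith
  have hn' : 0 < (n : ℝ) ^ (1 / q) := Real.rpow_pos_of_pos (by exact_mod_cast hn) _
  have hd' : 0 < (d : ℝ) ^ ((1 : ℝ) / 2) := Real.rpow_pos_of_pos (by exact_mod_cast hd) _
  have hδ0 : 0 ≤ δ := by rw [hδ]; positivity
  have hx : Real.sqrt (∑ j, (x j) ^ 2) ≤
      κ * (D₁ * (∑ i, |A.mulVec x i| ^ p) ^ (1 / p)) := by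
    have h1 := (hA x).1
    rw [one_div, inv_mul_le_iff₀ hκ0] at h1
    rw [hD₁]
    exact h1.trans (mul_le_mul_of_nonneg_left (l2_le_max_mul_lp hp _) hκ0.le)
  have herr : (∑ i, |(B' - B).mulVec x i| ^ q) ^ (1 / q) ≤
      ε * (∑ i, |A.mulVec x i| ^ p) ^ (1 / p) := by
    refine (lq_le_of_abs_le hq (by positivity) _
      (abs_mulVec_le hδ0 (B' - B) (fun i j => hB' i j) x)).trans ?_
    calc (n : ℝ) ^ (1 / q) * (δ * ((d : ℝ) ^ ((1 : ℝ) / 2) * Real.sqrt (∑ j, (x j) ^ 2)))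
        ≤ (n : ℝ) ^ (1 / q) * (δ * ((d : ℝ) ^ ((1 : ℝ) / 2) *
            (κ * (D₁ * (∑ i, |A.mulVec x i| ^ p) ^ (1 / p))))) := by gcongr
      _ = ε * (∑ i, |A.mulVec x i| ^ p) ^ (1 / p) := by
          rw [hδ]
          field_simp
  obtain ⟨hlo, hhi⟩ := hB x
  have hup := Real.Lp_add_le Finset.univ (B.mulVec x) ((B' - B).mulVec x) hq
  have hdown := Real.Lp_add_le Finset.univ (B'.mulVec x) (-(B' - B).mulVec x) hq
  simp only [Matrix.sub_mulVec, Pi.sub_apply, Pi.neg_apply, abs_neg, add_sub_cancel,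
    ← sub_eq_add_neg, sub_sub_cancel] at hup hdown herr
  have hT : 0 ≤ (∑ i, |A.mulVec x i| ^ p) ^ (1 / p) :=
    Real.rpow_nonneg (Finset.sum_nonneg fun i _ => by positivity) _
  constructor
  · linarith
  · nlinarith [mul_nonneg (sq_nonneg ε) hT]
end

section
/- Let ψ : ℝ → ℝ be the bump function defined by ψ(x) = C_ψ·exp(−1/(1−x²)) for |x| < 1 and ψ(x) = 0 for |x| ≥ 1, where C_ψ > 0 is the normalization constant making ∫_ℝ ψ(x) dx = 1. Then there exist absolute constants C₁, C₂ > 0 such that for every integer k ≥ 2, the k-th derivative of ψ satisfies sup_{x ∈ ℝ} |ψ^{(k)}(x)| ≤ C₁ · (C₂ · k · log k)^{2k+2}. -/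
open MeasureTheory Real intervalIntegral

/-!
On `(-1, 1)` the bump is the restriction of the holomorphic function
`F z = exp (-(1 - z ^ 2)⁻¹)`. Writing `s = 1 - x ^ 2`, the identity
`(1 - z ^ 2)⁻¹ = ((1 - z)⁻¹ + (1 + z)⁻¹) / 2` gives `Re (1 - z ^ 2)⁻¹ ≥ 2 / (9 s)` on the circle
of radius `s / 4` about `x` (`norm_cexp_bump_le`). Cauchy's estimate then bounds the `k`-th
derivative by `k! (4 / s) ^ k exp (-2 / (9 s))`, and `t ^ k ≤ k! exp t` at `t = 2 / (9 s)` turns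
this into `18 ^ k (k!) ^ 2`, uniformly in `x` (`norm_iteratedDeriv_bumpC_le`).
For `|x| ≥ 1` every derivative vanishes (`iteratedDeriv_eq_zero_outside`), and
`18 ^ k (k!) ^ 2 ≤ (5 k) ^ (2 k)` is well below the required bound.
-/

/-- The holomorphic function on `ℂ \ {±1}` extending the unnormalized bump from `(-1, 1)`. -/
noncomputable def bumpC (z : ℂ) : ℂ := Complex.exp (-(1 - z ^ 2)⁻¹)

lemma re_inv_ge {w : ℂ} {a : ℝ} (ha : 0 < a) (h : ‖w - a‖ ≤ a / 2) :
    2 / (9 * a) ≤ (w⁻¹).re := by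
  have h1 : |(w - a).re| ≤ a / 2 := (Complex.abs_re_le_norm _).trans h
  have h2 : a / 2 ≤ w.re := by
    rw [Complex.sub_re, Complex.ofReal_re] at h1
    linarith [(abs_le.1 h1).1]
  have h3 : ‖w‖ ≤ 3 * a / 2 := by
    calc ‖w‖ = ‖(w - a) + a‖ := by ring_nf
      _ ≤ ‖w - a‖ + ‖(a : ℂ)‖ := norm_add_le _ _
      _ ≤ 3 * a / 2 := by
        rw [Complex.norm_real, Real.norm_of_nonneg ha.le]; linarith
  have h4 : 0 < ‖w‖ := by
    refine norm_pos_iff.2 ?_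
    rintro rfl
    rw [Complex.zero_re] at h2
    linarith
  rw [Complex.inv_re, Complex.normSq_eq_norm_sq, div_le_div_iff₀ (by positivity) (by positivity)]
  nlinarith [pow_le_pow_left₀ h4.le h3 2]

lemma one_sub_sq_pos {x : ℝ} (hx : |x| < 1) : 0 < 1 - x ^ 2 := by
  have := (sq_lt_one_iff_abs_lt_one x).2 hx
  linarith

/-- The closed disc of radius `(1 - x ^ 2) / 4` about `x` avoids `±1`, and the bump is
exponentially small on it, because both `1 - z` and `1 + z` stay within relative distance `1 / 2`
of the positive reals `1 - x` and `1 + x`. -/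
lemma norm_cexp_bump_le {x : ℝ} (hx : |x| < 1) {z : ℂ}
    (hz : ‖z - x‖ ≤ (1 - x ^ 2) / 4) :
    1 - z ^ 2 ≠ 0 ∧ ‖bumpC z‖ ≤ Real.exp (-(2 / (9 * (1 - x ^ 2)))) := by
  obtain ⟨hx1, hx2⟩ := abs_lt.1 hx
  have hs := one_sub_sq_pos hx
  have hA : 2 / (9 * (1 - x)) ≤ ((1 - z)⁻¹).re := by
    refine re_inv_ge (by linarith) ?_
    have : (1 - z) - ((1 - x : ℝ) : ℂ) = -(z - x) := by push_cast; ring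
    rw [this, norm_neg]
    nlinarith
  have hB : 2 / (9 * (1 + x)) ≤ ((1 + z)⁻¹).re := by
    refine re_inv_ge (by linarith) ?_
    have : (1 + z) - ((1 + x : ℝ) : ℂ) = z - x := by push_cast; ring
    rw [this]
    nlinarith
  have p1 : 0 < 1 - x := by linarith
  have p2 : 0 < 1 + x := by linarith
  have n1 : 1 - z ≠ 0 := by
    intro h
    rw [h, inv_zero, Complex.zero_re] at hA
    have : 0 < 2 / (9 * (1 - x)) := by positivity
    linarith
  have n2 : 1 + z ≠ 0 := by
    intro h
    rw [h, inv_zero, Complex.zero_re] at hB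
    have : 0 < 2 / (9 * (1 + x)) := by positivity
    linarith
  have hf : 1 - z ^ 2 = (1 - z) * (1 + z) := by ring
  refine ⟨hf ▸ mul_ne_zero n1 n2, ?_⟩
  have hsplit : (1 - z ^ 2)⁻¹ = ((1 / 2 : ℝ) : ℂ) * ((1 - z)⁻¹ + (1 + z)⁻¹) := by
    rw [hf]; push_cast; field_simp; ring
  have hsum : 2 / (9 * (1 - x ^ 2)) = 1 / 2 * (2 / (9 * (1 - x)) + 2 / (9 * (1 + x))) := by
    have : 1 - x ^ 2 = (1 - x) * (1 + x) := by ring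
    rw [this]; field_simp; ring
  rw [bumpC, Complex.norm_exp, Complex.neg_re, hsplit, Complex.re_ofReal_mul, Complex.add_re, hsum]
  apply Real.exp_le_exp.2
  linarith

lemma analyticAt_bumpC {z : ℂ} (hz : 1 - z ^ 2 ≠ 0) : AnalyticAt ℂ bumpC z := by
  unfold bumpC
  exact (((analyticAt_const.sub (analyticAt_id.pow 2)).inv hz).neg).cexp

lemma norm_iteratedDeriv_bumpC_le {x : ℝ} (hx : |x| < 1) (k : ℕ) :
    ‖iteratedDeriv k bumpC (x : ℂ)‖ ≤ 18 ^ k * (k.factorial : ℝ) ^ 2 := by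
  have hs := one_sub_sq_pos hx
  set s := 1 - x ^ 2 with hs_def
  have hd : DifferentiableOn ℂ bumpC (Metric.closedBall (x : ℂ) (s / 4)) := fun z hz =>
    (analyticAt_bumpC (norm_cexp_bump_le hx
      (mem_closedBall_iff_norm.1 hz)).1).differentiableAt.differentiableWithinAt
  have hc := Complex.norm_iteratedDeriv_le_of_forall_mem_sphere_norm_le k
    (show 0 < s / 4 by positivity) (hd.diffContOnCl_ball subset_rfl)
    (fun z hz => (norm_cexp_bump_le hx (mem_sphere_iff_norm.1 hz).le).2)
  refine hc.trans ?_
  have ht : 0 < 2 / (9 * s) := by positivity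
  have he := Real.pow_div_factorial_le_exp (2 / (9 * s)) ht.le k
  have hk : (0 : ℝ) < k.factorial := by positivity
  rw [div_le_iff₀ hk] at he
  have hsk : (18 : ℝ) ^ k * (s / 4) ^ k * (2 / (9 * s)) ^ k = 1 := by
    rw [← mul_pow, ← mul_pow]
    convert one_pow k
    field_simp
    norm_num
  rw [← hs_def, Real.exp_neg, div_le_iff₀ (by positivity), ← div_eq_mul_inv,
    div_le_iff₀ (Real.exp_pos _)]
  calc (k.factorial : ℝ) = k.factorial * (18 ^ k * (s / 4) ^ k * (2 / (9 * s)) ^ k) := by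
        rw [hsk, mul_one]
    _ ≤ k.factorial * (18 ^ k * (s / 4) ^ k * (Real.exp (2 / (9 * s)) * k.factorial)) := by
        gcongr
    _ = _ := by ring

/-- At a boundary point `±1` differentiability is not needed: if `iteratedDeriv k f` is
differentiable there, its derivative is the one-sided derivative from outside, which is `0`;
otherwise `deriv` is `0` by convention. -/
lemma iteratedDeriv_eq_zero_outside {f : ℝ → ℝ} (hf : ∀ x, 1 ≤ |x| → f x = 0) (k : ℕ) :
    ∀ x, 1 ≤ |x| → iteratedDeriv k f x = 0 := by
  induction k with
  | zero => simpa using hf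
  | succ k ih =>
    intro x hx
    rw [iteratedDeriv_succ]
    by_cases hd : DifferentiableAt ℝ (iteratedDeriv k f) x
    · rcases le_abs.1 hx with h | h
      · rw [← hd.derivWithin (uniqueDiffOn_Ici x x Set.self_mem_Ici),
          derivWithin_congr (s := Set.Ici x) (f := fun _ => (0 : ℝ))
            (fun y (hy : x ≤ y) => ih y (le_abs.2 (Or.inl (h.trans hy)))) (ih x hx)]
        simp
      · rw [← hd.derivWithin (uniqueDiffOn_Iic x x Set.self_mem_Iic),
          derivWithin_congr (s := Set.Iic x) (f := fun _ => (0 : ℝ))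
            (fun y (hy : y ≤ x) => ih y (le_abs.2 (Or.inr (h.trans (neg_le_neg hy))))) (ih x hx)]
        simp
    · exact deriv_zero_of_not_differentiableAt hd

lemma iteratedDeriv_eq_re {C : ℝ} {f : ℝ → ℝ}
    (hf : ∀ x, |x| < 1 → f x = C * Real.exp (-(1 - x ^ 2)⁻¹)) (k : ℕ) :
    ∀ x : ℝ, |x| < 1 → iteratedDeriv k f x = C * (iteratedDeriv k bumpC (x : ℂ)).re := by
  induction k with
  | zero =>
    intro x hx
    have : bumpC x = ((Real.exp (-(1 - x ^ 2)⁻¹) : ℝ) : ℂ) := by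
      rw [bumpC]; push_cast; rfl
    rw [iteratedDeriv_zero, iteratedDeriv_zero, hf x hx, this, Complex.ofReal_re]
  | succ k ih =>
    intro x hx
    have hn : 1 - (x : ℂ) ^ 2 ≠ 0 := by
      exact_mod_cast (one_sub_sq_pos hx).ne'
    have hd : HasDerivAt (iteratedDeriv k bumpC) (iteratedDeriv (k + 1) bumpC x) (x : ℂ) := by
      rw [iteratedDeriv_succ]
      exact (iteratedDeriv_eq_iterate (f := bumpC) ▸
        (analyticAt_bumpC hn).iterated_deriv k).differentiableAt.hasDerivAt
    rw [iteratedDeriv_succ]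
    refine HasDerivAt.deriv ((hd.real_of_complex.const_mul C).congr_of_eventuallyEq ?_)
    filter_upwards [(isOpen_lt continuous_abs continuous_const).mem_nhds hx] with y hy
    exact ih y hy

lemma numeric_bound {k : ℕ} (hk : 2 ≤ k) :
    (18 : ℝ) ^ k * (k.factorial : ℝ) ^ 2 ≤ (10 * k * Real.log k) ^ (2 * k + 2) := by
  have hk' : (2 : ℝ) ≤ k := by exact_mod_cast hk
  have hlog : 1 / 2 ≤ Real.log k := by
    have := Real.log_le_log two_pos hk'
    linarith [Real.log_two_gt_d9]
  have hfac : (k.factorial : ℝ) ≤ (k : ℝ) ^ k := by exact_mod_cast Nat.factorial_le_pow k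
  calc (18 : ℝ) ^ k * (k.factorial : ℝ) ^ 2 ≤ 25 ^ k * ((k : ℝ) ^ k) ^ 2 := by
        gcongr; norm_num
    _ = (5 * k : ℝ) ^ (2 * k) := by
        rw [← pow_mul, mul_comm k 2, pow_mul, pow_mul, ← mul_pow, mul_pow 5]; norm_num
    _ ≤ (5 * k : ℝ) ^ (2 * k + 2) := pow_le_pow_right₀ (by linarith) (by omega)
    _ ≤ _ := by
        refine pow_le_pow_left₀ (by positivity) ?_ _
        nlinarith

/-- Let `ψ(x) = C_ψ exp(−1/(1−x²))` for `|x| < 1` and `ψ(x) = 0`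
otherwise, where `C_ψ > 0` normalizes `∫ ψ = 1`.  Then there are absolute constants
`C₁, C₂ > 0` such that for every `k ≥ 2` and every `x ∈ ℝ`,
`|ψ^{(k)}(x)| ≤ C₁ (C₂ k log k)^{2k+2}`. -/
theorem stmt15 (Cψ : ℝ) (hCψ : 0 < Cψ) (ψ : ℝ → ℝ)
    (hψ : ∀ x : ℝ, ψ x = if |x| < 1 then Cψ * Real.exp (-(1 - x ^ 2)⁻¹) else 0)
    (hnorm : ∫ x : ℝ, ψ x = 1) :
    ∃ C₁ C₂ : ℝ, 0 < C₁ ∧ 0 < C₂ ∧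
      ∀ k : ℕ, 2 ≤ k → ∀ x : ℝ,
        |iteratedDeriv k ψ x| ≤ C₁ * (C₂ * k * Real.log k) ^ (2 * k + 2) := by
  refine ⟨Cψ, 10, hCψ, by norm_num, fun k hk x => ?_⟩
  have hb := numeric_bound hk
  rcases lt_or_ge |x| 1 with hx | hx
  · rw [iteratedDeriv_eq_re (fun y hy => by rw [hψ, if_pos hy]) k x hx, abs_mul, abs_of_pos hCψ]
    gcongr
    exact ((Complex.abs_re_le_norm _).trans (norm_iteratedDeriv_bumpC_le hx k)).trans hb
  · rw [iteratedDeriv_eq_zero_outside (fun y hy => by rw [hψ, if_neg hy.not_gt]) k x hx, abs_zero]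
    exact mul_nonneg hCψ.le (le_trans (by positivity) hb)
end

section
/- There exists an absolute constant c > 0 such that for every positive integer d divisible by 8, |Σ_{0 ≤ i ≤ d, i even} (−1)^{i/2} · C(d/2, i/2) · g(d − 2i)| ≥ c · 2^{d/2}/√d, where g : ℤ → ℝ is defined by g(m) = ln|m| if |m| ≥ 1 and g(0) = 0. -/
/-!
Write `d = 4m` with `m` even and `i = 2j`. Since the summand is symmetric about `j = m` and
`(-1)^m = 1`, the sum equals `2 ∑_{l < m} (-1)^(l+1) C(2m, m+1+l) x_l` with `x_l = log (4(l+1))`.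

Pascal's rule `C(2m, m+1+l) = b_l + b_{l+1}`, `b_l = C(2m-1, m+l)`, allows a summation by parts
(`sum_by_parts`): half of the sum is `-b_0 x_0 + ∑_l (-1)^l b_{l+1} (x_{l+1} - x_l)`.
Both `b_{l+1}` and `x_{l+1} - x_l = log ((l+2)/(l+1))` are nonnegative and decrease with `l`, so
this alternating sum is at most its first term `b_1 log 2 ≤ b_0 log 2` (`alternating_bounds`).
As `x_0 = 2 log 2` and `2 b_0 = C(2m, m)`, the whole sum is at most `-log 2 * C(2m, m)`, and the
lower bound `4^m ≤ 2 √m C(2m, m)` (`sixteen_pow_le`) gives the claim with `c = log 2`.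
-/

open Finset Real

/-- A finite alternating sum of a nonnegative decreasing sequence lies between `0` and its first
term. -/
lemma alternating_bounds (N : ℕ) : ∀ e : ℕ → ℝ, (∀ l, 0 ≤ e l) → (∀ l, e (l + 1) ≤ e l) →
    0 ≤ ∑ l ∈ range N, (-1 : ℝ) ^ l * e l ∧ ∑ l ∈ range N, (-1 : ℝ) ^ l * e l ≤ e 0 := by
  induction N with
  | zero => intro e h0 _; simpa using h0 0
  | succ N ih =>
    intro e h0 h1
    obtain ⟨ha, hb⟩ := ih (fun l => e (l + 1)) (fun l => h0 _) (fun l => h1 _)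
    have : ∑ l ∈ range (N + 1), (-1 : ℝ) ^ l * e l
        = e 0 - ∑ l ∈ range N, (-1 : ℝ) ^ l * e (l + 1) := by
      rw [sum_range_succ', sub_eq_add_neg, ← sum_neg_distrib, add_comm]
      simp [pow_succ]
    rw [this]
    have := h1 0
    simp only [zero_add] at hb this
    constructor <;> linarith

lemma sum_by_parts (b x : ℕ → ℝ) (N : ℕ) :
    ∑ l ∈ range (N + 1), (-1 : ℝ) ^ (l + 1) * (b l + b (l + 1)) * x l
      = -b 0 * x 0 + ∑ l ∈ range N, (-1 : ℝ) ^ l * (b (l + 1) * (x (l + 1) - x l))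
        + (-1) ^ (N + 1) * b (N + 1) * x N := by
  induction N with
  | zero => simp; ring
  | succ N ih => rw [sum_range_succ, ih, sum_range_succ]; ring

lemma choose_step (k l : ℕ) :
    (2 * k + 1).choose (k + 1 + (l + 1)) ≤ (2 * k + 1).choose (k + 1 + l) := by
  have h := Nat.choose_succ_right_eq (2 * k + 1) (k + 1 + l)
  have h2 : 2 * k + 1 - (k + 1 + l) ≤ k + 1 + l + 1 := by omega
  have h3 := Nat.mul_le_mul_left ((2 * k + 1).choose (k + 1 + l)) h2
  rw [← h] at h3
  exact Nat.le_of_mul_le_mul_right h3 (by omega)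

/-- The squared form of `4 ^ m ≤ 2 * √m * C(2m, m)`, which is stable under induction. -/
lemma sixteen_pow_le (k : ℕ) :
    16 ^ (k + 1) ≤ 4 * (k + 1) * (Nat.centralBinom (k + 1)) ^ 2 := by
  induction k with
  | zero => simp [Nat.centralBinom, Nat.choose]
  | succ k ih =>
    have h := Nat.succ_mul_centralBinom_succ (k + 1)
    set A := Nat.centralBinom (k + 1)
    set B := Nat.centralBinom (k + 1 + 1)
    have h2 : (k + 1 + 1) * 16 ^ (k + 1 + 1) ≤ (k + 1 + 1) * (4 * (k + 1 + 1) * B ^ 2) := by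
      calc (k + 1 + 1) * 16 ^ (k + 1 + 1) = 16 * (k + 2) * 16 ^ (k + 1) := by ring
        _ ≤ 16 * (k + 2) * (4 * (k + 1) * A ^ 2) := Nat.mul_le_mul_left _ ih
        _ ≤ 4 * (2 * (2 * (k + 1) + 1) * A) ^ 2 := by
          nlinarith [Nat.zero_le (A ^ 2)]
        _ = 4 * ((k + 1 + 1) * B) ^ 2 := by rw [← h]
        _ = _ := by ring
    exact Nat.le_of_mul_le_mul_left h2 (by omega)

/-- The increments of `log (4 (l + 1))`, in the form in which they are visibly nonnegative and
decreasing. -/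
lemma log_diff (l : ℕ) : Real.log (4 * ((l + 1 : ℕ) + 1)) - Real.log (4 * ((l : ℝ) + 1))
    = Real.log (1 + 1 / ((l : ℝ) + 1)) := by
  have : (0 : ℝ) < (l : ℝ) + 1 := by positivity
  rw [← Real.log_div (by positivity) (by positivity)]
  congr 1
  push_cast
  field_simp

lemma half_sum_le (k : ℕ) :
    ∑ l ∈ range (k + 1), (-1 : ℝ) ^ (l + 1) * ((2 * (k + 1)).choose (k + 1 + 1 + l) : ℝ)
        * Real.log (4 * ((l : ℝ) + 1))
      ≤ -Real.log 2 * ((2 * k + 1).choose (k + 1) : ℝ) := by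
  set b : ℕ → ℝ := fun l => ((2 * k + 1).choose (k + 1 + l) : ℝ) with hb
  set x : ℕ → ℝ := fun l => Real.log (4 * ((l : ℝ) + 1)) with hx
  have hpas : ∀ l, ((2 * (k + 1)).choose (k + 1 + 1 + l) : ℝ) = b l + b (l + 1) := by
    intro l
    rw [show 2 * (k + 1) = (2 * k + 1) + 1 by ring, show k + 1 + 1 + l = (k + 1 + l) + 1 by ring,
      Nat.choose_succ_succ]
    push_cast [hb]
    rfl
  simp_rw [hpas]
  have hparts := sum_by_parts b x k
  have hlast : b (k + 1) = 0 := by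
    simp only [hb, Nat.cast_eq_zero]
    exact Nat.choose_eq_zero_of_lt (by omega)
  rw [hparts, hlast]
  have hd : ∀ l, x (l + 1) - x l = Real.log (1 + 1 / ((l : ℝ) + 1)) := log_diff
  have hd0 : ∀ l, 0 ≤ x (l + 1) - x l := by
    intro l
    rw [hd]
    apply Real.log_nonneg
    have : (0 : ℝ) ≤ 1 / ((l : ℝ) + 1) := by positivity
    linarith
  have hd1 : ∀ l, x (l + 1 + 1) - x (l + 1) ≤ x (l + 1) - x l := by
    intro l
    rw [hd, hd]
    apply Real.log_le_log (by positivity)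
    gcongr
    simp
  have hb0 : ∀ l, 0 ≤ b l := fun l => Nat.cast_nonneg _
  have hb1 : ∀ l, b (l + 1) ≤ b l := fun l => Nat.cast_le.mpr (choose_step k l)
  have halt := (alternating_bounds k (fun l => b (l + 1) * (x (l + 1) - x l))
    (fun l => mul_nonneg (hb0 _) (hd0 _))
    (fun l => mul_le_mul (hb1 _) (hd1 _) (hd0 _) (hb0 _))).2
  have hx1 : x (0 + 1) - x 0 = Real.log 2 := by rw [hd]; norm_num
  have hx0 : x 0 = 2 * Real.log 2 := by
    simp only [hx]
    rw [show (4 : ℝ) * (((0 : ℕ) : ℝ) + 1) = 2 ^ 2 by norm_num, Real.log_pow]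
    norm_num
  simp only [hx1] at halt
  have hlog : 0 < Real.log 2 := Real.log_pos (by norm_num)
  have hmul := mul_le_mul_of_nonneg_right (hb1 0) hlog.le
  have hbz : ((2 * k + 1).choose (k + 1) : ℝ) = b 0 := rfl
  rw [hx0, hbz]
  linarith

lemma even_sum_reindex (n : ℕ) (f : ℕ → ℝ) :
    ∑ i ∈ (range (2 * n + 1)).filter (fun i => Even i), f i = ∑ j ∈ range (n + 1), f (2 * j) := by
  symm
  apply sum_bij (fun j _ => 2 * j)
  · intro j hj
    simp only [mem_filter, mem_range] at *
    exact ⟨by omega, by simp⟩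
  · intro a _ c _ h
    omega
  · intro i hi
    simp only [mem_filter, mem_range] at hi
    obtain ⟨h1, r, hr⟩ := hi
    exact ⟨r, by simp only [mem_range]; omega, by omega⟩
  · intros; rfl

/-- Folding a sum over `0, …, 2m` at its midpoint, when the middle term vanishes and the summand is
symmetric. -/
lemma fold_sum (m : ℕ) (f : ℕ → ℝ) (hmid : f m = 0)
    (hsymm : ∀ l, l < m → f (m - 1 - l) = f (m + 1 + l)) :
    ∑ j ∈ range (2 * m + 1), f j = 2 * ∑ l ∈ range m, f (m + 1 + l) := by
  rw [show 2 * m + 1 = m + 1 + m by ring, sum_range_add, sum_range_succ, hmid,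
    ← sum_range_reflect f m, two_mul, add_zero]
  congr 1
  exact sum_congr rfl fun l hl => hsymm l (mem_range.mp hl)

theorem stmt18 :
    ∃ c : ℝ, 0 < c ∧
      ∀ d : ℕ, 0 < d → 8 ∣ d →
        |∑ i ∈ (Finset.range (d + 1)).filter (fun i => Even i),
            (-1 : ℝ) ^ (i / 2) * (Nat.choose (d / 2) (i / 2) : ℝ) *
              (if ((d : ℤ) - 2 * i) = 0 then 0
               else Real.log |(d : ℝ) - 2 * i|)| ≥
          c * (2 : ℝ) ^ (d / 2) / Real.sqrt d := by
  have hlog : 0 < Real.log 2 := Real.log_pos (by norm_num)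
  refine ⟨Real.log 2, hlog, ?_⟩
  intro d hd h8
  obtain ⟨k, hk, rfl⟩ : ∃ k, Even (k + 1) ∧ d = 2 * (2 * (k + 1)) := by
    obtain ⟨q, rfl⟩ := h8
    exact ⟨2 * q - 1, ⟨q, by omega⟩, by omega⟩
  rw [even_sum_reindex]
  simp only [Nat.mul_div_cancel_left _ (Nat.zero_lt_two)]
  rw [fold_sum (k + 1)]
  · have hS : ∑ l ∈ range (k + 1), ((-1 : ℝ) ^ (k + 1 + 1 + l) *
        ((2 * (k + 1)).choose (k + 1 + 1 + l) : ℝ) *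
        (if (((2 * (2 * (k + 1)) : ℕ) : ℤ) - 2 * ((2 * (k + 1 + 1 + l) : ℕ) : ℤ)) = 0 then 0
          else Real.log |((2 * (2 * (k + 1)) : ℕ) : ℝ) - 2 * ((2 * (k + 1 + 1 + l) : ℕ) : ℝ)|))
        = ∑ l ∈ range (k + 1), (-1 : ℝ) ^ (l + 1) * ((2 * (k + 1)).choose (k + 1 + 1 + l) : ℝ)
        * Real.log (4 * ((l : ℝ) + 1)) := by
      refine sum_congr rfl fun l _ => ?_
      rw [if_neg (by push_cast; omega), show k + 1 + 1 + l = (k + 1) + (l + 1) by ring, pow_add,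
        hk.neg_one_pow, one_mul]
      congr 1
      rw [← Real.log_abs (4 * ((l : ℝ) + 1)), ← abs_neg]
      congr 2
      push_cast
      ring
    rw [hS]
    have hle := half_sum_le k
    have hcb : ((k + 1).centralBinom : ℝ) = 2 * ((2 * k + 1).choose (k + 1) : ℝ) := by
      rw [Nat.centralBinom_eq_two_mul_choose, show 2 * (k + 1) = 2 * k + 1 + 1 by ring,
        Nat.choose_succ_succ, Nat.choose_symm_half]
      push_cast
      ring
    have hpow : (2 : ℝ) ^ (2 * (k + 1))
        ≤ ((k + 1).centralBinom : ℝ) * Real.sqrt ((2 * (2 * (k + 1)) : ℕ) : ℝ) := by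
      refine (pow_le_pow_iff_left₀ (by positivity) (by positivity) two_ne_zero).mp ?_
      rw [mul_pow, Real.sq_sqrt (by positivity)]
      have h : (16 : ℝ) ^ (k + 1) ≤ 4 * (k + 1) * ((k + 1).centralBinom : ℝ) ^ 2 := by
        exact_mod_cast sixteen_pow_le k
      have h4 : ((2 : ℝ) ^ (2 * (k + 1))) ^ 2 = 16 ^ (k + 1) := by
        rw [pow_mul, ← pow_mul, mul_comm (k + 1) 2, pow_mul]
        norm_num
      rw [h4]
      push_cast
      linarith
    have hsq : 0 < Real.sqrt ((2 * (2 * (k + 1)) : ℕ) : ℝ) := Real.sqrt_pos.mpr (by positivity)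
    have hfin : Real.log 2 * (2 : ℝ) ^ (2 * (k + 1)) / Real.sqrt ((2 * (2 * (k + 1)) : ℕ) : ℝ)
        ≤ Real.log 2 * ((k + 1).centralBinom : ℝ) := by
      rw [div_le_iff₀ hsq, mul_assoc]
      exact mul_le_mul_of_nonneg_left hpow hlog.le
    refine hfin.trans (le_trans ?_ (neg_le_abs _))
    rw [hcb]
    linarith
  · rw [if_pos (by push_cast; ring), mul_zero]
  · intro l hl
    have hidx : k + 1 - 1 - l + (k + 1 + 1 + l) = 2 * (k + 1) := by omega
    have hcast : ((k - l : ℕ) : ℝ) = (k : ℝ) - l := Nat.cast_sub (by omega)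
    rw [if_neg (by push_cast; omega), if_neg (by push_cast; omega)]
    congr 1
    · congr 1
      -- the two indices add up to an even number
      · rw [neg_one_pow_congr]
        rw [Nat.even_iff, Nat.even_iff]
        omega
      · rw [← Nat.choose_symm_of_eq_add (show 2 * (k + 1) = (k + 1 - 1 - l) + (k + 1 + 1 + l) from
          hidx.symm)]
    · rw [← abs_neg]
      congr 2
      rw [Nat.add_sub_cancel]
      push_cast [hcast]
      ring
end

section
/- There exists an absolute constant c > 0 such that for every integer L ≥ 1 and every even integer D ≥ 2 there exists a set S = {(s_1, t_1), (s_2, t_2), …, (s_m, t_m)} of pairs of vectors s_i, t_i ∈ ℝ^D with m ≥ c · 2^D/√D satisfying: (a) ⟨s_i, t_i⟩ = 0 for every i; (b) ⟨s_i, t_j⟩ ≥ L² for all i ≠ j; and (c) every coordinate of every s_i and every t_i lies in {0, L}. -/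
/-!
Write `D = 2n` and index the family by the `n`-element subsets `A` of `Fin D`, with `s_A` equal to
`L` on `A` and `0` off `A`, and `t_A` equal to `L` off `A` and `0` on `A`. Then `⟨s_A, t_A⟩ = 0`,
while for `A ≠ B` of equal size some `j ∈ A \ B` contributes `L²` to `⟨s_A, t_B⟩`. The number of
pairs is the central binomial coefficient, which is at least `4 ^ n / (2 √n)`
(`sixteen_pow_le_centralBinom_sq`); this gives the constant `c = 1/2`.
-/

open Finset Real

/-- A lower bound for the central binomial coefficient that is sharp up to a constant factor,
unlike `Nat.four_pow_lt_mul_centralBinom`, which loses a factor `√n`. -/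
theorem sixteen_pow_le_centralBinom_sq (n : ℕ) (hn : 1 ≤ n) :
    ((4 : ℝ) ^ n) ^ 2 ≤ 4 * n * (n.centralBinom : ℝ) ^ 2 := by
  induction n, hn using Nat.le_induction with
  | base => norm_num [Nat.centralBinom, Nat.choose]
  | succ n hn ih =>
    have h : ((n : ℝ) + 1) * ((n + 1).centralBinom : ℝ) = 2 * (2 * n + 1) * n.centralBinom := by
      exact_mod_cast Nat.succ_mul_centralBinom_succ n
    have hpos : (0 : ℝ) < (n : ℝ) + 1 := by positivity
    -- After multiplying by `n + 1`, the recursion reduces the step to `4n(n+1) ≤ (2n+1)²`.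
    refine le_of_mul_le_mul_left ?_ hpos
    calc ((n : ℝ) + 1) * ((4 : ℝ) ^ (n + 1)) ^ 2 = 16 * (n + 1) * ((4 : ℝ) ^ n) ^ 2 := by ring
      _ ≤ 16 * (n + 1) * (4 * n * (n.centralBinom : ℝ) ^ 2) := by gcongr
      _ ≤ 4 * (2 * (2 * n + 1) * (n.centralBinom : ℝ)) ^ 2 := by
        nlinarith [sq_nonneg (n.centralBinom : ℝ)]
      _ = (n + 1) * (4 * ((n + 1 : ℕ) : ℝ) * ((n + 1).centralBinom : ℝ) ^ 2) := by
        rw [← h]; push_cast; ring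

/-- There is an absolute constant `c > 0` such that for every integer
`L ≥ 1` and every even integer `D ≥ 2` there is a set of `m ≥ c 2^D/√D` distinct pairs
`(s_i, t_i)` of vectors in `ℝ^D` with `⟨s_i, t_i⟩ = 0`, `⟨s_i, t_j⟩ ≥ L²` for `i ≠ j`, and
all coordinates of all `s_i, t_i` in `{0, L}`. -/
theorem stmt19 :
    ∃ c : ℝ, 0 < c ∧
      ∀ L : ℕ, 1 ≤ L → ∀ D : ℕ, 2 ≤ D → Even D →
        ∃ (m : ℕ) (s t : Fin m → (Fin D → ℝ)),
          c * (2 : ℝ) ^ D / Real.sqrt D ≤ (m : ℝ) ∧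
          Function.Injective (fun i => (s i, t i)) ∧
          (∀ i, (∑ j, s i j * t i j) = 0) ∧
          (∀ i k, i ≠ k → (L : ℝ) ^ 2 ≤ ∑ j, s i j * t k j) ∧
          (∀ i j, (s i j = 0 ∨ s i j = L) ∧ (t i j = 0 ∨ t i j = L)) := by
  refine ⟨1 / 2, by norm_num, fun L hL D hD hE => ?_⟩
  obtain ⟨n, rfl⟩ := hE
  have hn : 1 ≤ n := by omega
  have hcard : (powersetCard n (univ : Finset (Fin (n + n)))).card = n.centralBinom := by
    rw [card_powersetCard, card_univ, Fintype.card_fin, Nat.centralBinom, two_mul]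
  let e := (Finset.equivFinOfCardEq hcard).symm
  let s : Fin n.centralBinom → Fin (n + n) → ℝ :=
    fun i j => if j ∈ (e i : Finset (Fin (n + n))) then (L : ℝ) else 0
  let t : Fin n.centralBinom → Fin (n + n) → ℝ :=
    fun i j => if j ∈ (e i : Finset (Fin (n + n))) then 0 else (L : ℝ)
  have horth : ∀ i, (∑ j, s i j * t i j) = 0 := fun i =>
    Finset.sum_eq_zero fun j _ => by simp only [s, t]; split_ifs <;> simp
  have hsep : ∀ i k, i ≠ k → (L : ℝ) ^ 2 ≤ ∑ j, s i j * t k j := by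
    intro i k hik
    have hi := (mem_powersetCard.1 (e i).2).2
    have hk := (mem_powersetCard.1 (e k).2).2
    -- Distinct sets of equal size are not nested.
    have hns : ¬ (e i : Finset (Fin (n + n))) ⊆ e k := fun h =>
      hik (e.injective (Subtype.ext (Finset.eq_of_subset_of_card_le h (by omega))))
    obtain ⟨j, hji, hjk⟩ := Finset.not_subset.1 hns
    have hj : s i j * t k j = (L : ℝ) ^ 2 := by simp only [s, t, if_pos hji, if_neg hjk, sq]
    rw [← hj]
    refine Finset.single_le_sum (f := fun j => s i j * t k j) (fun x _ => ?_) (mem_univ j)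
    simp only [s, t]
    split_ifs <;> positivity
  refine ⟨n.centralBinom, s, t, ?_, ?_, horth, hsep, fun i j => ?_⟩
  · have hb := sixteen_pow_le_centralBinom_sq n hn
    have hn' : (1 : ℝ) ≤ n := by exact_mod_cast hn
    rw [div_le_iff₀ (Real.sqrt_pos.2 (by positivity))]
    refine le_of_sq_le_sq ?_ (by positivity)
    rw [mul_pow _ (Real.sqrt _), Real.sq_sqrt (by positivity), ← two_mul n, pow_mul]
    push_cast
    norm_num
    nlinarith [mul_nonneg (zero_le_one.trans hn') (sq_nonneg (n.centralBinom : ℝ))]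
  · intro i k hik
    by_contra hne
    have h := hsep i k hne
    have hL' : (1 : ℝ) ≤ L := by exact_mod_cast hL
    -- Equal pairs would have `⟨s_i, t_k⟩ = ⟨s_i, t_i⟩ = 0`, below `L²`.
    have ht : t i = t k := (Prod.ext_iff.1 hik).2
    rw [← ht, horth i] at h
    nlinarith
  · simp only [s, t]
    split_ifs <;> simp
end
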